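/- Let θ > 0 and let 𝒳 be a nonnegative random variable with E[𝒳] ≤ 1. Then there exists a Borel probability measure ν on ℝ, supported on [0,∞), such that for every λ ≥ 0, ∫ e^{−λt} dν(t) = exp(θ ∫_0^1 (E[exp(−λx𝒳)]−1)/x dx). (That is, exp(θ ∫_0^1 (E[exp(−λx𝒳)]−1)/x dx) is the Laplace transform of a probability distribution on [0,∞), denoted GD^{(𝒳)}(θ).) -/

import Mathlib

open MeasureTheory Filter Topology

open ProbabilityTheory Real Set
open scoped NNReal ENNReal

/-!
The distribution `GD^{(X)}(θ)` is the value at time `1` of a driftless subordinator whose Lévy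
measure `Λ` is the image of `θ dx / x ⊗ P` on `(0, 1] × Ω` under `(x, ω) ↦ x * X ω`. If `Λ` were
finite, this would be a compound Poisson distribution. In general one removes the jumps smaller than
`ε` and lets `ε → 0`: the limit of the Laplace transforms is continuous at `0`, so the truncated
distributions are tight and converge along a subsequence. All that is needed is
`∫ min 1 t dΛ(t) < ∞`, which holds as soon as `log (1 + X)` is integrable, because
`min 1 (x X) ≤ 2 x X / (1 + x X)` and `∫_0^1 X / (1 + x X) dx = log (1 + X)`.
-/

/-- The Laplace transform `l ↦ ∫ e^{-lt} dμ(t)` of a measure `μ` on `[0, ∞)`, as a function on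
`[0, ∞)`. Working on `ℝ≥0` makes the integrand bounded and builds in the support condition. -/
noncomputable def laplaceTransform (μ : Measure ℝ≥0) (l : ℝ≥0) : ℝ :=
  ∫ t : ℝ≥0, exp (-(l * t)) ∂μ

/-- `L` is the Laplace transform of a probability distribution on `[0, ∞)`. -/
def IsLaplaceTransform (L : ℝ≥0 → ℝ) : Prop :=
  ∃ ν : ProbabilityMeasure ℝ≥0, laplaceTransform ν = L

/-- The Bernstein function `l ↦ ∫ (1 - e^{-lt}) dΛ(t)` of a measure `Λ` on `[0, ∞)`, that is, the
Laplace exponent of the driftless subordinator with Lévy measure `Λ`. A mass of `Λ` at `0` has no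
effect. -/
noncomputable def bernsteinFunction (Λ : Measure ℝ≥0) (l : ℝ≥0) : ℝ :=
  ∫ t : ℝ≥0, (1 - exp (-(l * t))) ∂Λ

lemma exp_neg_mul_le_one (l t : ℝ≥0) : exp (-(l * t)) ≤ 1 :=
  exp_le_one_iff.2 (neg_nonpos.2 (by positivity))

lemma integrable_exp_neg_mul (μ : Measure ℝ≥0) [IsFiniteMeasure μ] (l : ℝ≥0) :
    Integrable (fun t : ℝ≥0 ↦ exp (-(l * t))) μ :=
  .of_bound (by fun_prop) 1 <| .of_forall fun t ↦ by
    simpa only [norm_eq_abs, abs_exp] using exp_neg_mul_le_one l t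

lemma laplaceTransform_zero (μ : Measure ℝ≥0) [IsProbabilityMeasure μ] :
    laplaceTransform μ 0 = 1 := by
  simp [laplaceTransform]

lemma laplaceTransform_conv (μ ν : Measure ℝ≥0) [IsFiniteMeasure μ] [IsFiniteMeasure ν]
    (l : ℝ≥0) :
    laplaceTransform (μ ∗ ν) l = laplaceTransform μ l * laplaceTransform ν l := by
  simp only [laplaceTransform, integral_conv (integrable_exp_neg_mul _ l), NNReal.coe_add,
    mul_add, neg_add, exp_add, integral_const_mul, integral_mul_const]

lemma bernsteinFunction_eq_measureReal_univ_sub (μ : Measure ℝ≥0) [IsFiniteMeasure μ] (l : ℝ≥0) :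
    bernsteinFunction μ l = μ.real univ - laplaceTransform μ l := by
  simp [bernsteinFunction, laplaceTransform,
    integral_sub (integrable_const _) (integrable_exp_neg_mul μ l)]

lemma bernsteinFunction_smul (c : ℝ≥0) (Λ : Measure ℝ≥0) (l : ℝ≥0) :
    bernsteinFunction (c • Λ) l = c * bernsteinFunction Λ l := by
  simp [bernsteinFunction, integral_smul_nnreal_measure, NNReal.smul_def]

namespace IsLaplaceTransform

variable {L M : ℝ≥0 → ℝ}

protected lemma one : IsLaplaceTransform 1 :=
  ⟨⟨Measure.dirac 0, inferInstance⟩, by ext; simp [laplaceTransform]⟩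

protected lemma mul (hL : IsLaplaceTransform L) (hM : IsLaplaceTransform M) :
    IsLaplaceTransform (L * M) := by
  obtain ⟨μ, rfl⟩ := hL
  obtain ⟨ν, rfl⟩ := hM
  exact ⟨⟨μ ∗ ν, inferInstance⟩, funext (laplaceTransform_conv μ ν)⟩

protected lemma pow (hL : IsLaplaceTransform L) (n : ℕ) : IsLaplaceTransform (L ^ n) := by
  induction n with
  | zero => simpa only [pow_zero] using IsLaplaceTransform.one
  | succ n ih => simpa only [pow_succ] using ih.mul hL

lemma integral_of_discrete {ι : Type*} [Countable ι] [MeasurableSpace ι]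
    [DiscreteMeasurableSpace ι] {L : ι → ℝ≥0 → ℝ} (hL : ∀ i, IsLaplaceTransform (L i))
    (p : Measure ι) [IsProbabilityMeasure p] :
    IsLaplaceTransform fun l ↦ ∫ i, L i l ∂p := by
  choose ν hν using hL
  let κ : Kernel ι ℝ≥0 := ⟨fun i ↦ ν i, .of_discrete⟩
  have : IsMarkovKernel κ := ⟨fun i ↦ (ν i).prop⟩
  refine ⟨⟨(κ ∘ₖ Kernel.const Unit p) (), inferInstance⟩, funext fun l ↦ ?_⟩
  calc
    _ = ∫ i, laplaceTransform (ν i) l ∂p := Kernel.integral_comp (integrable_exp_neg_mul _ l)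
    _ = ∫ i, L i l ∂p := by simp only [hν]

lemma exists_measure_real (hL : IsLaplaceTransform L) :
    ∃ ν : Measure ℝ, IsProbabilityMeasure ν ∧ ν (Iio 0) = 0 ∧
      ∀ l : ℝ≥0, ∫ t, exp (-l * t) ∂ν = L l := by
  obtain ⟨ν, rfl⟩ := hL
  refine ⟨(ν : Measure ℝ≥0).map (↑), Measure.isProbabilityMeasure_map (by fun_prop), ?_, ?_⟩
  · have hpre : ((↑) : ℝ≥0 → ℝ) ⁻¹' Iio 0 = ∅ := by
      ext t
      simp
    rw [Measure.map_apply (by fun_prop) measurableSet_Iio, hpre, measure_empty]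
  · intro l
    rw [integral_map (by fun_prop) (by fun_prop)]
    simp only [laplaceTransform, neg_mul]

end IsLaplaceTransform

lemma integral_pow_poissonMeasure (r : ℝ≥0) (z : ℝ) :
    ∫ n, z ^ n ∂(poissonMeasure r) = exp (-(r * (1 - z))) := by
  calc
    _ = ∑' n : ℕ, exp (-r) * ((r * z) ^ n / n.factorial) := by
      simp only [integral_poissonMeasure, smul_eq_mul, mul_pow]
      congr with n
      ring
    _ = exp (-r) * exp (r * z) := by
      rw [tsum_mul_left, exp_eq_exp_ℝ, NormedSpace.exp_eq_tsum_div]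
    _ = exp (-(r * (1 - z))) := by
      rw [← exp_add]
      congr 1
      ring

lemma IsLaplaceTransform.exp_neg_mul_one_sub {L : ℝ≥0 → ℝ} (hL : IsLaplaceTransform L) (r : ℝ≥0) :
    IsLaplaceTransform fun l ↦ exp (-(r * (1 - L l))) := by
  simpa only [Pi.pow_apply, integral_pow_poissonMeasure] using
    IsLaplaceTransform.integral_of_discrete hL.pow (poissonMeasure r)

lemma isLaplaceTransform_exp_neg_bernsteinFunction_of_isFiniteMeasure
    (Λ : Measure ℝ≥0) [IsFiniteMeasure Λ] :
    IsLaplaceTransform fun l ↦ exp (-bernsteinFunction Λ l) := by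
  let Λ' : FiniteMeasure ℝ≥0 := ⟨Λ, inferInstance⟩
  have hΛ : Λ = Λ'.mass • (Λ'.normalize : Measure ℝ≥0) :=
    congrArg FiniteMeasure.toMeasure Λ'.self_eq_mass_smul_normalize
  have hL : IsLaplaceTransform (laplaceTransform Λ'.normalize) := ⟨_, rfl⟩
  have hexponent (l : ℝ≥0) :
      bernsteinFunction Λ l = Λ'.mass * (1 - laplaceTransform Λ'.normalize l) := by
    rw [hΛ, bernsteinFunction_smul, bernsteinFunction_eq_measureReal_univ_sub, probReal_univ]
  simpa only [hexponent] using hL.exp_neg_mul_one_sub Λ'.mass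

lemma isTightMeasureSet_range_of_eventually_cofinite {ι X : Type*} [MeasurableSpace X]
    [TopologicalSpace X] {μ : ι → Measure X} (hμ : ∀ i, IsTightMeasureSet {μ i})
    (h : ∀ ε > 0, ∃ K, IsCompact K ∧ ∀ᶠ i in cofinite, μ i Kᶜ ≤ ε) :
    IsTightMeasureSet (range μ) := by
  simp only [isTightMeasureSet_iff_exists_isCompact_measure_compl_le, forall_mem_range,
    mem_singleton_iff, forall_eq] at hμ ⊢
  intro ε hε
  obtain ⟨K, hK, hfin⟩ := h ε hε
  choose C hC hμC using fun i ↦ hμ i ε hε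
  refine ⟨K ∪ ⋃ i ∈ {i | ¬ μ i Kᶜ ≤ ε}, C i,
    hK.union (Set.Finite.isCompact_biUnion hfin fun i _ ↦ hC i), fun i ↦ ?_⟩
  by_cases hi : μ i Kᶜ ≤ ε
  · exact (measure_mono (compl_subset_compl.2 subset_union_left)).trans hi
  · refine (measure_mono (compl_subset_compl.2 ?_)).trans (hμC i)
    exact (subset_biUnion_of_mem (u := C) hi).trans subset_union_right

lemma mul_measureReal_compl_Iic_inv_le_bernsteinFunction (ν : Measure ℝ≥0) [IsFiniteMeasure ν]
    {s : ℝ≥0} (hs : 0 < s) :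
    (1 - exp (-1)) * ν.real (Iic s⁻¹)ᶜ ≤ bernsteinFunction ν s := by
  have hsub : (Iic s⁻¹)ᶜ ⊆ {t : ℝ≥0 | 1 - exp (-1) ≤ 1 - exp (-(s * t))} := by
    intro t ht
    have hst : 1 ≤ s * t := by
      rw [mem_compl_iff, mem_Iic, not_le] at ht
      exact ((inv_lt_iff_one_lt_mul₀' hs).1 ht).le
    exact sub_le_sub_left (exp_le_exp.2 <| neg_le_neg <| mod_cast hst) 1
  calc
    _ ≤ (1 - exp (-1)) * ν.real {t : ℝ≥0 | 1 - exp (-1) ≤ 1 - exp (-(s * t))} := by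
      refine mul_le_mul_of_nonneg_left (measureReal_mono hsub) ?_
      simp
    _ ≤ bernsteinFunction ν s :=
      mul_meas_ge_le_integral_of_nonneg
        (.of_forall fun t ↦ sub_nonneg.2 (exp_neg_mul_le_one s t))
        ((integrable_const _).sub (integrable_exp_neg_mul ν s)) _

lemma isTightMeasureSet_range_of_tendsto_laplaceTransform {ν : ℕ → ProbabilityMeasure ℝ≥0}
    {M : ℝ≥0 → ℝ} (hM : ContinuousAt M 0)
    (hlim : ∀ l, Tendsto (fun n ↦ laplaceTransform (ν n) l) atTop (𝓝 (M l))) :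
    IsTightMeasureSet (range fun n ↦ (ν n : Measure ℝ≥0)) := by
  have hM0 : M 0 = 1 := tendsto_nhds_unique (hlim 0) (by simp [laplaceTransform_zero])
  have hc : 0 < 1 - exp (-1) := by simp
  refine isTightMeasureSet_range_of_eventually_cofinite (fun n ↦ isTightMeasureSet_singleton)
    fun ε hε ↦ ?_
  obtain ⟨δ, hδ, hδε⟩ := ENNReal.lt_iff_exists_nnreal_btwn.1 hε
  have hδ' : 0 < (1 - exp (-1)) * δ := mul_pos hc (by exact_mod_cast hδ)
  obtain ⟨s, hMs, hs⟩ : ∃ s, 1 - M s < (1 - exp (-1)) * δ ∧ 0 < s := by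
    have hgap : Tendsto (fun s ↦ 1 - M s) (𝓝[>] 0) (𝓝 0) := by
      simpa [hM0] using (hM.tendsto.const_sub 1).mono_left (nhdsWithin_le_nhds (s := Ioi 0))
    exact ((hgap.eventually_lt_const hδ').and self_mem_nhdsWithin).exists
  refine ⟨Iic s⁻¹, Icc_bot (a := s⁻¹) ▸ isCompact_Icc, ?_⟩
  rw [Nat.cofinite_eq_atTop]
  filter_upwards [((hlim s).const_sub 1).eventually_lt_const hMs] with n hn
  have hmarkov := mul_measureReal_compl_Iic_inv_le_bernsteinFunction (ν n : Measure ℝ≥0) hs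
  rw [bernsteinFunction_eq_measureReal_univ_sub, probReal_univ] at hmarkov
  have htail : (ν n : Measure ℝ≥0).real (Iic s⁻¹)ᶜ ≤ δ :=
    le_of_mul_le_mul_left (hmarkov.trans hn.le) hc
  exact ((ENNReal.toReal_le_toReal (measure_ne_top _ _) ENNReal.coe_ne_top).1 htail).trans hδε.le

lemma tendsto_laplaceTransform {ι : Type*} {F : Filter ι} {ν : ι → ProbabilityMeasure ℝ≥0}
    {ν₀ : ProbabilityMeasure ℝ≥0} (h : Tendsto ν F (𝓝 ν₀)) (l : ℝ≥0) :
    Tendsto (fun i ↦ laplaceTransform (ν i) l) F (𝓝 (laplaceTransform ν₀ l)) :=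
  ProbabilityMeasure.tendsto_iff_forall_integral_tendsto.1 h <|
    .ofNormedAddCommGroup (fun t ↦ exp (-(l * t))) (by fun_prop) 1 fun t ↦ by
      simpa only [norm_eq_abs, abs_exp] using exp_neg_mul_le_one l t

theorem isLaplaceTransform_of_tendsto {L : ℕ → ℝ≥0 → ℝ} {M : ℝ≥0 → ℝ}
    (hL : ∀ n, IsLaplaceTransform (L n)) (hM : ContinuousAt M 0)
    (hlim : ∀ l, Tendsto (L · l) atTop (𝓝 (M l))) : IsLaplaceTransform M := by
  choose ν hν using hL
  simp only [← hν] at hlim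
  have hcompact : IsCompact (closure (range ν)) := isCompact_closure_of_isTightMeasureSet <| by
    simpa only [exists_range_iff] using!
      isTightMeasureSet_range_of_tendsto_laplaceTransform hM hlim
  obtain ⟨ν₀, -, φ, hφ, hνφ⟩ := hcompact.tendsto_subseq fun n ↦ subset_closure (mem_range_self n)
  exact ⟨ν₀, funext fun l ↦ tendsto_nhds_unique (tendsto_laplaceTransform hνφ l)
    ((hlim l).comp hφ.tendsto_atTop)⟩

section LevyMeasure

variable {Λ : Measure ℝ≥0}

lemma one_sub_exp_neg_mul_le (l t : ℝ≥0) :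
    1 - exp (-(l * t)) ≤ max 1 (l : ℝ) * min 1 (t : ℝ) := by
  have hlt := one_sub_le_exp_neg (l * t : ℝ)
  have hexp := exp_pos (-(l * t : ℝ))
  rcases le_total 1 (t : ℝ) with ht | ht
  · rw [min_eq_left ht, mul_one]
    linarith [le_max_left 1 (l : ℝ)]
  · rw [min_eq_right ht]
    linarith [mul_le_mul_of_nonneg_right (le_max_right 1 (l : ℝ)) t.coe_nonneg]

lemma norm_one_sub_exp_neg_mul_le (l t : ℝ≥0) :
    ‖1 - exp (-(l * t))‖ ≤ max 1 (l : ℝ) * min 1 (t : ℝ) := by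
  rw [norm_of_nonneg (sub_nonneg.2 (exp_neg_mul_le_one l t))]
  exact one_sub_exp_neg_mul_le l t

lemma integrable_one_sub_exp_neg_mul (hΛ : Integrable (fun t : ℝ≥0 ↦ min 1 (t : ℝ)) Λ) (l : ℝ≥0) :
    Integrable (fun t : ℝ≥0 ↦ 1 - exp (-(l * t))) Λ :=
  (hΛ.const_mul (max 1 (l : ℝ))).mono' (by fun_prop) <| .of_forall (norm_one_sub_exp_neg_mul_le l)

lemma continuousAt_bernsteinFunction_zero (hΛ : Integrable (fun t : ℝ≥0 ↦ min 1 (t : ℝ)) Λ) :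
    ContinuousAt (bernsteinFunction Λ) 0 := by
  refine continuousAt_of_dominated (bound := fun t ↦ min 1 (t : ℝ))
    (.of_forall fun l ↦ by fun_prop) ?_ hΛ (.of_forall fun t ↦ by fun_prop)
  filter_upwards [Iic_mem_nhds zero_lt_one] with l (hl : l ≤ 1)
  refine .of_forall fun t ↦ (norm_one_sub_exp_neg_mul_le l t).trans_eq ?_
  rw [max_eq_left (mod_cast hl), one_mul]

lemma measure_Ioi_lt_top_of_integrable_min_one
    (hΛ : Integrable (fun t : ℝ≥0 ↦ min 1 (t : ℝ)) Λ) {ε : ℝ≥0} (hε : 0 < ε) :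
    Λ (Ioi ε) < ∞ := by
  refine (measure_mono fun t (ht : ε < t) ↦ ?_).trans_lt
    (hΛ.measure_ge_lt_top (ε := min 1 (ε : ℝ)) (by positivity))
  exact min_le_min_left 1 (NNReal.coe_le_coe.2 ht.le)

lemma tendsto_bernsteinFunction_restrict_Ioi
    (hΛ : Integrable (fun t : ℝ≥0 ↦ min 1 (t : ℝ)) Λ) {ε : ℕ → ℝ≥0} (hanti : Antitone ε)
    (hε : Tendsto ε atTop (𝓝 0)) (l : ℝ≥0) :
    Tendsto (fun n ↦ bernsteinFunction (Λ.restrict (Ioi (ε n))) l) atTop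
      (𝓝 (bernsteinFunction Λ l)) := by
  have hcover : ∀ t ∉ ⋃ n, Ioi (ε n), 1 - exp (-(l * t)) = 0 := by
    intro t ht
    have hle : ∀ n, t ≤ ε n := by simpa using ht
    simp [nonpos_iff_eq_zero.1 (ge_of_tendsto' hε hle)]
  rw [bernsteinFunction, ← setIntegral_eq_integral_of_forall_compl_eq_zero hcover]
  exact tendsto_setIntegral_of_monotone (fun _ ↦ measurableSet_Ioi)
    (fun _ _ hmn ↦ Ioi_subset_Ioi (hanti hmn)) (integrable_one_sub_exp_neg_mul hΛ l).integrableOn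

theorem isLaplaceTransform_exp_neg_bernsteinFunction
    (hΛ : Integrable (fun t : ℝ≥0 ↦ min 1 (t : ℝ)) Λ) :
    IsLaplaceTransform fun l ↦ exp (-bernsteinFunction Λ l) := by
  obtain ⟨ε, hanti, hpos, hlim⟩ := exists_seq_strictAnti_tendsto (0 : ℝ≥0)
  have hfin (n : ℕ) : IsFiniteMeasure (Λ.restrict (Ioi (ε n))) :=
    isFiniteMeasure_restrict.2 (measure_Ioi_lt_top_of_integrable_min_one hΛ (hpos n)).ne
  exact isLaplaceTransform_of_tendsto
    (fun n ↦ isLaplaceTransform_exp_neg_bernsteinFunction_of_isFiniteMeasure _)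
    (continuousAt_bernsteinFunction_zero hΛ).neg.rexp
    fun l ↦ (tendsto_bernsteinFunction_restrict_Ioi hΛ hanti.antitone hlim l).neg.rexp

end LevyMeasure

section Dickman

/-- The measure `dx / x` on `(0, 1]`, the Lévy measure of the Dickman distribution. -/
noncomputable def dickmanLevyMeasure : Measure ℝ :=
  (volume.restrict (Ioc 0 1)).withDensity fun x ↦ ENNReal.ofReal x⁻¹

instance : SFinite dickmanLevyMeasure :=
  inferInstanceAs (SFinite (Measure.withDensity _ _))

lemma lintegral_dickmanLevyMeasure {f : ℝ → ℝ≥0∞} (hf : Measurable f) :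
    ∫⁻ x, f x ∂dickmanLevyMeasure = ∫⁻ x in Ioc 0 1, ENNReal.ofReal x⁻¹ * f x :=
  lintegral_withDensity_eq_lintegral_mul _ (by fun_prop) hf

lemma integral_dickmanLevyMeasure {E : Type*} [NormedAddCommGroup E] [NormedSpace ℝ E] (f : ℝ → E) :
    ∫ x, f x ∂dickmanLevyMeasure = ∫ x in Ioc (0 : ℝ) 1, x⁻¹ • f x := by
  rw [dickmanLevyMeasure, integral_withDensity_eq_integral_toReal_smul (by fun_prop) (by simp)]
  refine setIntegral_congr_fun measurableSet_Ioc fun x hx ↦ ?_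
  simp only [ENNReal.toReal_ofReal (inv_nonneg.2 hx.1.le)]

lemma ae_dickmanLevyMeasure_pos : ∀ᵐ x ∂dickmanLevyMeasure, 0 < x :=
  (withDensity_absolutelyContinuous _ _).ae_le <|
    (ae_restrict_mem measurableSet_Ioc).mono fun _ hx ↦ hx.1

lemma lintegral_Ioc_div_one_add_mul {a : ℝ} (ha : 0 ≤ a) :
    ∫⁻ x in Ioc (0 : ℝ) 1, ENNReal.ofReal (a / (1 + x * a)) = ENNReal.ofReal (log (1 + a)) := by
  have hpos {x : ℝ} (hx : 0 ≤ x) : 0 < 1 + x * a := by positivity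
  have hcont : ContinuousOn (fun x ↦ a / (1 + x * a)) (Icc 0 1) :=
    continuousOn_const.div (by fun_prop) fun x hx ↦ (hpos hx.1).ne'
  have hint : IntervalIntegrable (fun x ↦ a / (1 + x * a)) volume 0 1 :=
    hcont.intervalIntegrable_of_Icc zero_le_one
  have hderiv : ∀ x ∈ uIcc (0 : ℝ) 1,
      HasDerivAt (fun x ↦ log (1 + x * a)) (a / (1 + x * a)) x := fun x hx ↦ by
    rw [uIcc_of_le zero_le_one] at hx
    simpa using (((hasDerivAt_id x).mul_const a).const_add 1).log (hpos hx.1).ne'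
  have hvalue : ∫ x in Ioc (0 : ℝ) 1, a / (1 + x * a) = log (1 + a) := by
    rw [← intervalIntegral.integral_of_le zero_le_one,
      intervalIntegral.integral_eq_sub_of_hasDerivAt hderiv hint]
    simp
  rw [← hvalue, ofReal_integral_eq_lintegral_ofReal hint.1]
  filter_upwards [ae_restrict_mem measurableSet_Ioc] with x hx
  exact div_nonneg ha (hpos hx.1.le).le

lemma inv_mul_min_one_mul_le {a x : ℝ} (ha : 0 ≤ a) (hx : 0 < x) :
    x⁻¹ * min 1 (x * a) ≤ 2 * (a / (1 + x * a)) := by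
  have hxa : 0 ≤ x * a := by positivity
  rw [inv_mul_le_iff₀ hx, ← mul_div_assoc, ← mul_div_assoc, le_div_iff₀ (by positivity)]
  rcases le_total 1 (x * a) with h | h
  · rw [min_eq_left h]; linarith
  · rw [min_eq_right h]; nlinarith

lemma lintegral_dickmanLevyMeasure_min_one_mul_le {a : ℝ} (ha : 0 ≤ a) :
    ∫⁻ x, ENNReal.ofReal (min 1 (x * a)) ∂dickmanLevyMeasure ≤
      ENNReal.ofReal (2 * log (1 + a)) := by
  calc
    _ = ∫⁻ x in Ioc 0 1, ENNReal.ofReal x⁻¹ * ENNReal.ofReal (min 1 (x * a)) :=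
      lintegral_dickmanLevyMeasure (by fun_prop)
    _ ≤ ∫⁻ x in Ioc 0 1, ENNReal.ofReal 2 * ENNReal.ofReal (a / (1 + x * a)) := by
      refine setLIntegral_mono (by fun_prop) fun x hx ↦ ?_
      rw [← ENNReal.ofReal_mul (inv_nonneg.2 hx.1.le), ← ENNReal.ofReal_mul zero_le_two]
      exact ENNReal.ofReal_le_ofReal (inv_mul_min_one_mul_le ha hx.1)
    _ = ENNReal.ofReal (2 * log (1 + a)) := by
      rw [lintegral_const_mul _ (by fun_prop), lintegral_Ioc_div_one_add_mul ha,
        ENNReal.ofReal_mul zero_le_two]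

variable {Ω : Type*} [MeasurableSpace Ω]

/-- The image of `dx / x ⊗ P` under `(x, ω) ↦ x * X ω`: the Lévy measure of the generalized Dickman
distribution `GD^{(X)}(1)`, for `X ≥ 0`. Truncation at `0` makes it a measure on `[0, ∞)`. -/
noncomputable def generalizedDickmanLevyMeasure (P : Measure Ω) (X : Ω → ℝ) : Measure ℝ≥0 :=
  (dickmanLevyMeasure.prod P).map fun p ↦ (p.1 * X p.2).toNNReal

variable {P : Measure Ω} {X : Ω → ℝ}

lemma aemeasurable_toNNReal_mul [SFinite P] (hX : AEMeasurable X P) :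
    AEMeasurable (fun p : ℝ × Ω ↦ (p.1 * X p.2).toNNReal) (dickmanLevyMeasure.prod P) :=
  (measurable_fst.aemeasurable.mul hX.comp_snd).real_toNNReal

lemma integrable_min_one_generalizedDickmanLevyMeasure [SFinite P] (hX : AEMeasurable X P)
    (hX0 : ∀ᵐ ω ∂P, 0 ≤ X ω) (hXlog : Integrable (fun ω ↦ log (1 + X ω)) P) :
    Integrable (fun t : ℝ≥0 ↦ min 1 (t : ℝ)) (generalizedDickmanLevyMeasure P X) := by
  have hmeas : Measurable fun t : ℝ≥0 ↦ ENNReal.ofReal (min 1 (t : ℝ)) := by fun_prop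
  have hae := aemeasurable_toNNReal_mul hX
  refine ⟨by fun_prop, (hasFiniteIntegral_iff_ofReal (.of_forall fun t ↦ by positivity)).2 ?_⟩
  calc
    _ = ∫⁻ ω, ∫⁻ x, ENNReal.ofReal (min 1 ((x * X ω).toNNReal : ℝ)) ∂dickmanLevyMeasure ∂P := by
      rw [generalizedDickmanLevyMeasure, lintegral_map' hmeas.aemeasurable hae]
      exact lintegral_prod_symm _ (hmeas.comp_aemeasurable hae)
    _ ≤ ∫⁻ ω, ENNReal.ofReal (2 * log (1 + X ω)) ∂P := by
      refine lintegral_mono_ae ?_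
      filter_upwards [hX0] with ω hω
      refine (lintegral_congr_ae ?_).trans_le (lintegral_dickmanLevyMeasure_min_one_mul_le hω)
      filter_upwards [ae_dickmanLevyMeasure_pos] with x hx
      rw [coe_toNNReal _ (mul_nonneg hx.le hω)]
    _ < ∞ := (hXlog.const_mul 2).lintegral_lt_top

lemma bernsteinFunction_generalizedDickmanLevyMeasure [IsProbabilityMeasure P]
    (hX : AEMeasurable X P) (hX0 : ∀ᵐ ω ∂P, 0 ≤ X ω)
    (hXlog : Integrable (fun ω ↦ log (1 + X ω)) P) (l : ℝ≥0) :
    bernsteinFunction (generalizedDickmanLevyMeasure P X) l =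
      -∫ x in Ioc (0 : ℝ) 1, ((∫ ω, exp (-(l * x) * X ω) ∂P) - 1) / x := by
  have hint := integrable_one_sub_exp_neg_mul
    (integrable_min_one_generalizedDickmanLevyMeasure hX hX0 hXlog) l
  have hae := aemeasurable_toNNReal_mul hX
  calc
    _ = ∫ x, ∫ ω, (1 - exp (-(l * (x * X ω).toNNReal))) ∂P ∂dickmanLevyMeasure := by
      rw [bernsteinFunction, generalizedDickmanLevyMeasure, integral_map hae hint.1]
      exact integral_prod _ ((integrable_map_measure hint.1 hae).1 hint)
    _ = ∫ x in Ioc (0 : ℝ) 1, x⁻¹ • ∫ ω, (1 - exp (-(l * (x * X ω).toNNReal))) ∂P :=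
      integral_dickmanLevyMeasure _
    _ = ∫ x in Ioc (0 : ℝ) 1, -(((∫ ω, exp (-(l * x) * X ω) ∂P) - 1) / x) := by
      refine setIntegral_congr_fun measurableSet_Ioc fun x hx ↦ ?_
      have hexp : ∀ᵐ ω ∂P, exp (-(l * (x * X ω).toNNReal)) = exp (-(l * x) * X ω) := by
        filter_upwards [hX0] with ω hω
        rw [coe_toNNReal _ (mul_nonneg hx.1.le hω), neg_mul, mul_assoc]
      have hint_exp : Integrable (fun ω ↦ exp (-(l * (x * X ω).toNNReal))) P :=
        (integrable_exp_neg_mul (P.map fun ω ↦ (x * X ω).toNNReal) l).comp_aemeasurable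
          (hX.const_mul x).real_toNNReal
      simp only [integral_sub (integrable_const _) hint_exp, integral_congr_ae hexp,
        integral_const, probReal_univ, smul_eq_mul, one_mul]
      ring
    _ = _ := integral_neg _

theorem exists_generalized_dickman_X_general [IsProbabilityMeasure P] {θ : ℝ} (hθ : 0 ≤ θ)
    (hX : AEMeasurable X P) (hX0 : ∀ᵐ ω ∂P, 0 ≤ X ω)
    (hXlog : Integrable (fun ω ↦ log (1 + X ω)) P) :
    ∃ ν : Measure ℝ, IsProbabilityMeasure ν ∧ ν (Iio 0) = 0 ∧
      ∀ l : ℝ, 0 ≤ l →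
        ∫ t, exp (-l * t) ∂ν =
          exp (θ * ∫ x in Ioc (0 : ℝ) 1, ((∫ ω, exp (-(l * x) * X ω) ∂P) - 1) / x) := by
  lift θ to ℝ≥0 using hθ
  have hΛ := (integrable_min_one_generalizedDickmanLevyMeasure hX hX0
    hXlog).smul_measure_nnreal (c := θ)
  obtain ⟨ν, hν, hν0, hνL⟩ :=
    (isLaplaceTransform_exp_neg_bernsteinFunction hΛ).exists_measure_real
  refine ⟨ν, hν, hν0, fun l hl ↦ ?_⟩
  lift l to ℝ≥0 using hl
  rw [hνL, bernsteinFunction_smul, bernsteinFunction_generalizedDickmanLevyMeasure hX hX0 hXlog,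
    mul_neg, neg_neg]

end Dickman

lemma integrable_log_one_add {Ω : Type*} [MeasurableSpace Ω] {μ : Measure Ω} {X : Ω → ℝ}
    (hX0 : ∀ᵐ ω ∂μ, 0 ≤ X ω) (hX : Integrable X μ) :
    Integrable (fun ω ↦ log (1 + X ω)) μ := by
  refine hX.mono' (measurable_log.comp_aemeasurable
    (hX.aemeasurable.const_add 1)).aestronglyMeasurable ?_
  filter_upwards [hX0] with ω hω
  rw [norm_of_nonneg (log_nonneg (by linarith))]
  linarith [log_le_sub_one_of_pos (show 0 < 1 + X ω by linarith)]

/-- For every `θ > 0` and every nonnegative random variable `𝒳` with `E[𝒳] ≤ 1`,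
`exp (θ ∫_0^1 (E[exp(−λx𝒳)]−1)/x dx)` is the Laplace transform of a probability
distribution supported on `[0,∞)` (the distribution `GD^{(𝒳)}(θ)`). -/
theorem exists_generalized_dickman_X
    {Ω : Type*} [MeasurableSpace Ω] (P : Measure Ω) [IsProbabilityMeasure P]
    (θ : ℝ) (hθ : 0 < θ)
    (XX : Ω → ℝ) (hXXmeas : Measurable XX) (hXXnonneg : ∀ᵐ ω ∂P, 0 ≤ XX ω)
    (hXXint : Integrable XX P) (hXXmean : ∫ ω, XX ω ∂P ≤ 1) :
    ∃ ν : Measure ℝ, IsProbabilityMeasure ν ∧ ν (Set.Iio 0) = 0 ∧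
      ∀ l : ℝ, 0 ≤ l →
        ∫ t, Real.exp (-l * t) ∂ν =
          Real.exp (θ * ∫ x in Set.Ioc (0 : ℝ) 1,
            ((∫ ω, Real.exp (-(l * x) * XX ω) ∂P) - 1) / x) :=
  exists_generalized_dickman_X_general hθ.le hXXmeas.aemeasurable hXXnonneg
    (integrable_log_one_add hXXnonneg hXXint)
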